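/- arXiv:1304.1198 — 2 statements merged into one kernel-verified Lean document; each statement's English description precedes it below -/
import Mathlib

section
/- Let f : ℝⁿ → ℝ ∪ {+∞} be a symmetric convex polyhedral function, and let M be an open face (stratum) of the induced polyhedral stratification of dom f. Then for every point x ∈ M there is a neighborhood U of x with U ∩ M^sym = U ∩ M, where M^sym = ⋃_σ σM; consequently M^sym is a C^∞ manifold of the same dimension as M. -/
open Matrix

variable {n : ℕ}

/-- Dot product on `Fin n → ℝ`. -/
def dotp (v w : Fin n → ℝ) : ℝ := ∑ i, v i * w i

/-- `M` is a `C^k` manifold of dimension `d` around `x`. -/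
def IsCkManifoldAroundDim {E : Type*} [NormedAddCommGroup E] [NormedSpace ℝ E]
    (k : ℕ∞) (d : ℕ) (M : Set E) (x : E) : Prop :=
  ∃ U : Set E, IsOpen U ∧ x ∈ U ∧ ∃ (φ ψ : E → E) (F : Submodule ℝ E),
    Module.finrank ℝ F = d ∧
    ContDiffOn ℝ k φ U ∧ ContDiffOn ℝ k ψ (φ '' U) ∧
    (∀ y ∈ U, ψ (φ y) = y) ∧ φ '' (M ∩ U) = (F : Set E) ∩ φ '' U

/-!
Let `A` be the affine hull of a face `F` of the epigraph of `f`. If `F` has a relative interior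
point, then `F` is the whole intersection of `epi f` with `A`, so a symmetry of `f` preserves `F`,
hence its stratum, as soon as it sends one relative interior point of `F` into `F`.

For a point `x` of the stratum and a symmetry `T` there are two cases. If `T x` is not in the
closure of the projection of `F`, then no point near `x` is sent into the stratum by `T`.
Otherwise lift `x` to a relative interior point `(x, t)` of `F`; then `(T x, t) ∈ F`. Indeed, if
`A` contains vertical lines, then `A` already contains `(T x, t)`; if not, `F` is a piece of the
graph of `f`, the projection is a closed embedding of `A`, and closedness of `epi f` puts
`(T x, f (T x))` in `F`, where `f (T x) = f x = t`. With finitely many symmetries, the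
symmetrization and the stratum therefore agree near `x`.

The stratum is open in its affine hull, because a linear map between finite-dimensional spaces is
open onto its image; hence it is a manifold, and the symmetries carry its charts to the other
points of the symmetrization.
-/

open Set Filter Topology AffineMap

section IntrinsicInterior

theorem intrinsicInterior_mem_nhdsWithin_affineSpan {𝕜 V P : Type*} [Ring 𝕜] [AddCommGroup V]
    [Module 𝕜 V] [TopologicalSpace P] [AddTorsor V P] {s : Set P} {p : P}
    (hp : p ∈ intrinsicInterior 𝕜 s) : intrinsicInterior 𝕜 s ∈ 𝓝[affineSpan 𝕜 s] p := by
  obtain ⟨q, hq, rfl⟩ := hp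
  rw [nhdsWithin_eq_map_subtype_coe q.2]
  exact image_mem_map (isOpen_interior.mem_nhds hq)

variable {E : Type*} [AddCommGroup E] [Module ℝ E] [TopologicalSpace E] [IsTopologicalAddGroup E]
  [ContinuousSMul ℝ E] {P F : Set E} {p y : E}

theorem exists_mem_openSegment_of_mem_intrinsicInterior (hp : p ∈ intrinsicInterior ℝ F)
    (hy : y ∈ affineSpan ℝ F) : ∃ z ∈ F, p ∈ openSegment ℝ y z := by
  have hpA : p ∈ affineSpan ℝ F := subset_affineSpan ℝ F (intrinsicInterior_subset hp)
  have hline : Tendsto (lineMap p y : ℝ → E) (𝓝[<] 0) (𝓝[affineSpan ℝ F] p) := by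
    refine tendsto_nhdsWithin_iff.2 ⟨?_, .of_forall fun c => lineMap_mem c hpA hy⟩
    have hcont : Continuous (lineMap p y : ℝ → E) := lineMap_continuous
    exact (hcont.tendsto' 0 p (lineMap_apply_zero p y)).mono_left nhdsWithin_le_nhds
  obtain ⟨c, hcF, hc⟩ := ((hline.eventually_mem
    (intrinsicInterior_mem_nhdsWithin_affineSpan hp)).and self_mem_nhdsWithin).exists
  have hc : 0 < -c := neg_pos.2 hc
  have h1c : 0 < 1 - c := by linarith
  refine ⟨lineMap p y c, intrinsicInterior_subset hcF, -c / (1 - c), 1 / (1 - c),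
    by positivity, by positivity, by field_simp; ring, ?_⟩
  rw [lineMap_apply_module]
  match_scalars <;> field_simp
  ring

theorem mem_of_isExtreme_of_mem_affineSpan (hF : IsExtreme ℝ P F)
    (hp : p ∈ intrinsicInterior ℝ F) (hyP : y ∈ P) (hyF : y ∈ affineSpan ℝ F) : y ∈ F := by
  obtain ⟨z, hzF, hpz⟩ := exists_mem_openSegment_of_mem_intrinsicInterior hp hyF
  exact hF.left_mem_of_mem_openSegment hyP (hF.subset hzF) (intrinsicInterior_subset hp) hpz

theorem mapsTo_of_isExtreme_of_apply_mem {E' : Type*} [AddCommGroup E'] [Module ℝ E']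
    {P' F' : Set E'} (hF' : IsExtreme ℝ P' F') {φ : E →ᵃ[ℝ] E'} (hφ : MapsTo φ F P')
    (hp : p ∈ intrinsicInterior ℝ F) (hφp : φ p ∈ F') : MapsTo φ F F' := by
  intro y hy
  obtain ⟨z, hz, hpz⟩ :=
    exists_mem_openSegment_of_mem_intrinsicInterior hp (subset_affineSpan ℝ F hy)
  refine hF'.left_mem_of_mem_openSegment (hφ hy) (hφ hz) hφp ?_
  rw [← image_openSegment]
  exact mem_image_of_mem φ hpz

end IntrinsicInterior

theorem map_affineEquiv_eq_of_le {k V P : Type*} [DivisionRing k] [AddCommGroup V] [Module k V]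
    [AddTorsor V P] {A : AffineSubspace k P} [FiniteDimensional k A.direction] (e : P ≃ᵃ[k] P)
    (hA : A.map e.toAffineMap ≤ A) : A.map e.toAffineMap = A := by
  obtain rfl | hne := A.eq_bot_or_nonempty
  · exact AffineSubspace.map_bot _
  · have hdir : (A.map e.toAffineMap).direction = A.direction :=
      Submodule.eq_of_le_of_finrank_eq (AffineSubspace.direction_le hA) <| by
        rw [AffineSubspace.map_direction]
        exact e.linear.finrank_map_eq A.direction
    exact AffineSubspace.eq_of_direction_eq_of_nonempty_of_le hdir (hne.image e) hA

theorem image_eq_of_isExtreme_of_apply_mem {E : Type*} [AddCommGroup E] [Module ℝ E]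
    [TopologicalSpace E] [IsTopologicalAddGroup E] [ContinuousSMul ℝ E] [FiniteDimensional ℝ E]
    {P F : Set E} {p : E} (hF : IsExtreme ℝ P F) {e : E ≃ᵃ[ℝ] E} (he : ∀ q, e q ∈ P ↔ q ∈ P)
    (hp : p ∈ intrinsicInterior ℝ F) (hep : e p ∈ F) : e '' F = F := by
  have hmaps : MapsTo e F F :=
    mapsTo_of_isExtreme_of_apply_mem (φ := e.toAffineMap) hF
      (fun q hq => (he q).2 (hF.subset hq)) hp hep
  have hspan : (affineSpan ℝ F).map e.toAffineMap = affineSpan ℝ F := by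
    refine map_affineEquiv_eq_of_le e ?_
    rw [AffineSubspace.map_span]
    exact affineSpan_mono ℝ hmaps.image_subset
  refine hmaps.image_subset.antisymm fun y hy => ?_
  obtain ⟨q, hq, rfl⟩ : y ∈ (affineSpan ℝ F).map e.toAffineMap :=
    hspan.ge (subset_affineSpan ℝ F hy)
  exact ⟨q, mem_of_isExtreme_of_mem_affineSpan hF hp ((he q).1 (hF.subset hy)) hq, rfl⟩

section AffineImage

variable {E E' : Type*} [NormedAddCommGroup E] [NormedSpace ℝ E] [NormedAddCommGroup E']
  [NormedSpace ℝ E'] {s : Set E}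

theorem closure_image_subset_map_affineSpan [FiniteDimensional ℝ E'] (φ : E →ᵃ[ℝ] E') :
    closure (φ '' s) ⊆ (affineSpan ℝ s).map φ :=
  closure_minimal (image_mono (subset_affineSpan ℝ s))
    (AffineSubspace.closed_of_finiteDimensional _)

theorem closure_image_subset_image_closure_of_injOn_affineSpan [FiniteDimensional ℝ E]
    {φ : E →ᵃ[ℝ] E'} (hφ : InjOn φ (affineSpan ℝ s)) : closure (φ '' s) ⊆ φ '' closure s := by
  obtain rfl | hs := s.eq_empty_or_nonempty
  · simp
  have : Nonempty (affineSpan ℝ s) := (hs.affineSpan ℝ).to_subtype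
  have : CompleteSpace (affineSpan ℝ s) :=
    (AffineSubspace.closed_of_finiteDimensional (affineSpan ℝ s)).completeSpace_coe
  let ι := (affineSpan ℝ s).subtype
  have hinj : Function.Injective (φ.comp ι) := hφ.injective
  obtain ⟨K, hK⟩ := (φ.comp ι).antilipschitzWith_of_finiteDimensional hinj
  have hclosed : IsClosedMap (φ.comp ι) :=
    (hK.isClosedEmbedding
      (φ.comp ι).lipschitzWith_of_finiteDimensional.choose_spec.uniformContinuous).isClosedMap
  have hs_eq : s = ι '' (ι ⁻¹' s) :=
    (image_preimage_eq_of_subset fun q hq => ⟨⟨q, subset_affineSpan ℝ s hq⟩, rfl⟩).symm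
  calc closure (φ '' s)
      = closure ((φ.comp ι) '' (ι ⁻¹' s)) := by
        rw [coe_comp, image_comp, ← hs_eq]
    _ ⊆ (φ.comp ι) '' closure (ι ⁻¹' s) := hclosed.closure_image_subset _
    _ = φ '' (ι '' closure (ι ⁻¹' s)) := by rw [coe_comp, image_comp]
    _ ⊆ φ '' closure (ι '' (ι ⁻¹' s)) :=
        image_mono (image_closure_subset_closure_image continuous_subtype_val)
    _ = φ '' closure s := by rw [← hs_eq]

theorem image_mem_nhdsWithin_map [FiniteDimensional ℝ E'] (φ : E →ᵃ[ℝ] E')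
    {A : AffineSubspace ℝ E} {p : E} (hp : p ∈ A) (hs : s ∈ 𝓝[A] p) :
    φ '' s ∈ 𝓝[A.map φ] φ p := by
  have : Nonempty A := ⟨⟨p, hp⟩⟩
  let ψ : A →ᵃ[ℝ] A.map φ := φ.restrict le_rfl
  have hopen : IsOpenMap ψ :=
    isOpenMap_linear_iff.1 <| ψ.linear.isOpenMap_of_finiteDimensional <|
      ψ.linear_surjective_iff.2 (AffineMap.restrict.surjective φ rfl)
  have hpre : Subtype.val ⁻¹' s ∈ 𝓝 (⟨p, hp⟩ : A) := by
    rwa [nhdsWithin_eq_map_subtype_coe hp] at hs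
  change φ '' s ∈ 𝓝[A.map φ] (ψ ⟨p, hp⟩ : E')
  rw [nhdsWithin_eq_map_subtype_coe (ψ ⟨p, hp⟩).2]
  refine mem_of_superset (image_mem_map (hopen.image_mem_nhds hpre)) ?_
  rintro _ ⟨_, ⟨q, hq, rfl⟩, rfl⟩
  exact mem_image_of_mem φ hq

end AffineImage

/-- The epigraph of an extended-real-valued function, as a subset of `E × ℝ` (so points where
`f = ⊤` contribute nothing). -/
def epigraph {E : Type*} (f : E → EReal) : Set (E × ℝ) := {p | f p.1 ≤ p.2}

/-- The stratum of the domain of `f` induced by a face `F` of its epigraph: the projection of the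
relative interior of `F`. -/
def stratum {E : Type*} [NormedAddCommGroup E] [NormedSpace ℝ E] (F : Set (E × ℝ)) : Set E :=
  Prod.fst '' intrinsicInterior ℝ F

section Face

theorem injOn_fst_affineSpan_of_vertical_notMem {E : Type*} [AddCommGroup E] [Module ℝ E]
    {F : Set (E × ℝ)} (hv : ((0 : E), (1 : ℝ)) ∉ vectorSpan ℝ F) :
    InjOn Prod.fst (affineSpan ℝ F : Set (E × ℝ)) := by
  rintro ⟨z, a⟩ ha ⟨_, b⟩ hb rfl
  by_contra hne
  have hab : a - b ≠ 0 := fun h => hne (by rw [sub_eq_zero.1 h])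
  have hdiff : ((0 : E), a - b) ∈ vectorSpan ℝ F := by
    simpa [direction_affineSpan] using AffineSubspace.vsub_mem_direction ha hb
  exact hv (by simpa [hab] using Submodule.smul_mem _ (a - b)⁻¹ hdiff)

theorem mem_of_isExtreme_epigraph_of_le {E : Type*} [AddCommGroup E] [Module ℝ E] {f : E → EReal}
    {F : Set (E × ℝ)} (hF : IsExtreme ℝ (epigraph f) F) {z : E} {a b : ℝ} (hb : (z, b) ∈ F)
    (ha : f z ≤ a) (hab : a ≤ b) : (z, a) ∈ F := by
  obtain rfl | hab := hab.eq_or_lt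
  · exact hb
  have hb1 : f z ≤ ((b + 1 : ℝ) : EReal) :=
    ha.trans (EReal.coe_le_coe_iff.2 (by linarith))
  refine hF.left_mem_of_mem_openSegment (y := (z, b + 1)) ha hb1 hb ?_
  rw [← Prod.image_mk_openSegment_right, openSegment_eq_Ioo (by linarith)]
  exact mem_image_of_mem _ ⟨hab, lt_add_one b⟩

theorem apply_eq_of_mem_of_vertical_notMem {E : Type*} [AddCommGroup E] [Module ℝ E]
    {f : E → EReal} {F : Set (E × ℝ)} (hF : IsExtreme ℝ (epigraph f) F)
    (hv : ((0 : E), (1 : ℝ)) ∉ vectorSpan ℝ F) {z : E} {b : ℝ} (hb : (z, b) ∈ F) : f z = b := by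
  refine le_antisymm (hF.subset hb) (le_of_not_gt fun hlt => ?_)
  obtain ⟨a, hza, hab⟩ := EReal.lt_iff_exists_real_btwn.1 hlt
  have hab : a < b := EReal.coe_lt_coe_iff.1 hab
  have ha : (z, a) ∈ F := mem_of_isExtreme_epigraph_of_le hF hb hza.le hab.le
  have heq := injOn_fst_affineSpan_of_vertical_notMem hv (subset_affineSpan ℝ F ha)
    (subset_affineSpan ℝ F hb) rfl
  exact hab.ne (congrArg Prod.snd heq)

variable {E : Type*} [NormedAddCommGroup E] [NormedSpace ℝ E] [FiniteDimensional ℝ E]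
  {f : E → EReal} {F : Set (E × ℝ)} {x x' : E} {t : ℝ}

theorem mk_mem_affineSpan_of_vertical_mem (hv : ((0 : E), (1 : ℝ)) ∈ vectorSpan ℝ F)
    (hx : x ∈ closure (Prod.fst '' F)) (t : ℝ) : (x, t) ∈ affineSpan ℝ F := by
  obtain ⟨⟨_, s⟩, hs, rfl⟩ :=
    closure_image_subset_map_affineSpan (LinearMap.fst ℝ E ℝ).toAffineMap hx
  rw [← direction_affineSpan] at hv
  simpa using AffineSubspace.vadd_mem_of_mem_direction (Submodule.smul_mem _ (t - s) hv) hs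

theorem mk_mem_of_vertical_notMem (hclosed : IsClosed (epigraph f))
    (hF : IsExtreme ℝ (epigraph f) F) (hv : ((0 : E), (1 : ℝ)) ∉ vectorSpan ℝ F)
    (hp : (x, t) ∈ intrinsicInterior ℝ F) (hx' : x' ∈ closure (Prod.fst '' F))
    (hf : f x' = f x) : (x', t) ∈ F := by
  obtain ⟨⟨_, s⟩, hs, rfl⟩ := closure_image_subset_image_closure_of_injOn_affineSpan
    (φ := (LinearMap.fst ℝ E ℝ).toAffineMap) (injOn_fst_affineSpan_of_vertical_notMem hv) hx'
  have hsA := closure_minimal (subset_affineSpan ℝ F)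
    (AffineSubspace.closed_of_finiteDimensional (affineSpan ℝ F)) hs
  have hsF := mem_of_isExtreme_of_mem_affineSpan hF hp (closure_minimal hF.subset hclosed hs) hsA
  have hst : (s : EReal) = t := calc
    (s : EReal) = _ := (apply_eq_of_mem_of_vertical_notMem hF hv hsF).symm
    _ = f x := hf
    _ = t := apply_eq_of_mem_of_vertical_notMem hF hv (intrinsicInterior_subset hp)
  rwa [EReal.coe_eq_coe_iff.1 hst] at hsF

theorem mk_mem_of_mem_closure_of_apply_eq (hclosed : IsClosed (epigraph f))
    (hF : IsExtreme ℝ (epigraph f) F) (hp : (x, t) ∈ intrinsicInterior ℝ F)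
    (hx' : x' ∈ closure (Prod.fst '' F)) (hf : f x' = f x) : (x', t) ∈ F := by
  by_cases hv : ((0 : E), (1 : ℝ)) ∈ vectorSpan ℝ F
  · have hx't : (x', t) ∈ epigraph f :=
      hf.trans_le (hF.subset (intrinsicInterior_subset hp))
    exact mem_of_isExtreme_of_mem_affineSpan hF hp hx't (mk_mem_affineSpan_of_vertical_mem hv hx' t)
  · exact mk_mem_of_vertical_notMem hclosed hF hv hp hx' hf

end Face

section Stratum

variable {E : Type*} [NormedAddCommGroup E] [NormedSpace ℝ E] [FiniteDimensional ℝ E]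
  {f : E → EReal} {F : Set (E × ℝ)} {x : E}

theorem stratum_mem_nhdsWithin_affineSpan (hx : x ∈ stratum F) :
    stratum F ∈ 𝓝[affineSpan ℝ (stratum F)] x := by
  obtain ⟨p, hp, rfl⟩ := hx
  have hle : affineSpan ℝ (stratum F) ≤
      (affineSpan ℝ F).map (LinearMap.fst ℝ E ℝ).toAffineMap := by
    rw [AffineSubspace.map_span]
    exact affineSpan_mono ℝ (image_mono intrinsicInterior_subset)
  exact nhdsWithin_mono _ hle <| image_mem_nhdsWithin_map (LinearMap.fst ℝ E ℝ).toAffineMap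
    (subset_affineSpan ℝ F (intrinsicInterior_subset hp))
    (intrinsicInterior_mem_nhdsWithin_affineSpan hp)

theorem preimage_stratum_eq (hclosed : IsClosed (epigraph f)) (hF : IsExtreme ℝ (epigraph f) F)
    {T : E ≃ₗ[ℝ] E} (hT : ∀ y, f (T y) = f y) (hx : x ∈ stratum F)
    (hTx : T x ∈ closure (Prod.fst '' F)) : T ⁻¹' stratum F = stratum F := by
  obtain ⟨⟨x, t⟩, hp, rfl⟩ := hx
  let e : E × ℝ ≃ᵃ[ℝ] E × ℝ := (T.prodCongr (LinearEquiv.refl ℝ ℝ)).toAffineEquiv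
  have he : ∀ q, e q ∈ epigraph f ↔ q ∈ epigraph f := fun q =>
    (congrArg (· ≤ (q.2 : EReal)) (hT q.1)).to_iff
  have hep : e (x, t) ∈ F := mk_mem_of_mem_closure_of_apply_eq hclosed hF hp hTx (hT x)
  have heF : e '' intrinsicInterior ℝ F = intrinsicInterior ℝ F := by
    rw [← e.intrinsicInterior_image, image_eq_of_isExtreme_of_apply_mem hF he hp hep]
  have himage : T '' stratum F = stratum F := by
    conv_rhs => rw [stratum, ← heF]
    simp only [stratum, image_image]
    rfl
  conv_lhs => rw [← himage]
  exact preimage_image_eq _ T.injective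

theorem eventually_mem_stratum_of_apply_mem (hclosed : IsClosed (epigraph f))
    (hF : IsExtreme ℝ (epigraph f) F) {T : E ≃ₗ[ℝ] E} (hT : ∀ y, f (T y) = f y)
    (hx : x ∈ stratum F) : ∀ᶠ y in 𝓝 x, T y ∈ stratum F → y ∈ stratum F := by
  by_cases hTx : T x ∈ closure (Prod.fst '' F)
  · exact .of_forall fun y hy => (preimage_stratum_eq hclosed hF hT hx hTx).subset hy
  · have hcont : Continuous T := T.toLinearMap.continuous_of_finiteDimensional
    filter_upwards [hcont.continuousAt (isClosed_closure.compl_mem_nhds hTx)] with y hy hTy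
    exact absurd (subset_closure (image_mono intrinsicInterior_subset hTy)) hy

end Stratum

section Manifold

variable {E : Type*} [NormedAddCommGroup E] [NormedSpace ℝ E] {k : ℕ∞} {d : ℕ} {M N : Set E}
  {x : E}

theorem isCkManifoldAroundDim_of_mem_nhdsWithin_affineSpan (k : ℕ∞) (hx : x ∈ M)
    (hM : M ∈ 𝓝[affineSpan ℝ M] x) :
    IsCkManifoldAroundDim k (Module.finrank ℝ (vectorSpan ℝ M)) M x := by
  obtain ⟨U, hU, hxU, hUM⟩ := mem_nhdsWithin.1 hM
  refine ⟨U, hU, hxU, fun y => y - x, fun z => z + x, vectorSpan ℝ M, rfl,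
    (contDiff_id.sub contDiff_const).contDiffOn, (contDiff_id.add contDiff_const).contDiffOn,
    fun y _ => sub_add_cancel y x, Subset.antisymm ?_ ?_⟩
  · rintro _ ⟨y, ⟨hyM, hyU⟩, rfl⟩
    exact ⟨vsub_mem_vectorSpan ℝ hyM hx, mem_image_of_mem _ hyU⟩
  · rintro _ ⟨hyx, y, hyU, rfl⟩
    have hyA : y ∈ affineSpan ℝ M := by
      rw [← AffineSubspace.vsub_right_mem_direction_iff_mem (subset_affineSpan ℝ M hx),
        direction_affineSpan]
      exact hyx
    exact mem_image_of_mem _ ⟨hUM ⟨hyU, hyA⟩, hyU⟩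

theorem isCkManifoldAroundDim_congr (hM : IsCkManifoldAroundDim k d M x) (hMN : M =ᶠ[𝓝 x] N) :
    IsCkManifoldAroundDim k d N x := by
  obtain ⟨U, hU, hxU, φ, ψ, V, hd, hφ, hψ, hψφ, hMU⟩ := hM
  obtain ⟨W, hWMN, hW, hxW⟩ := eventually_nhds_iff.1 hMN.mem_iff
  refine ⟨U ∩ W, hU.inter hW, ⟨hxU, hxW⟩, φ, ψ, V, hd, hφ.mono inter_subset_left,
    hψ.mono (image_mono inter_subset_left), fun y hy => hψφ y hy.1, Subset.antisymm ?_ ?_⟩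
  · rintro _ ⟨y, ⟨hyN, hyU, hyW⟩, rfl⟩
    have hyV := hMU.subset (mem_image_of_mem φ ⟨(hWMN y hyW).2 hyN, hyU⟩)
    exact ⟨hyV.1, mem_image_of_mem φ ⟨hyU, hyW⟩⟩
  · rintro _ ⟨hyV, y, ⟨hyU, hyW⟩, rfl⟩
    obtain ⟨z, ⟨hzM, hzU⟩, hzy⟩ := hMU.superset ⟨hyV, mem_image_of_mem φ hyU⟩
    obtain rfl : z = y := (LeftInvOn.injOn hψφ) hzU hyU hzy
    exact mem_image_of_mem φ ⟨(hWMN z hyW).1 hzM, hyU, hyW⟩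

theorem isCkManifoldAroundDim_preimage (T : E ≃L[ℝ] E)
    (hM : IsCkManifoldAroundDim k d M (T x)) : IsCkManifoldAroundDim k d (T ⁻¹' M) x := by
  obtain ⟨U, hU, hxU, φ, ψ, V, hd, hφ, hψ, hψφ, hMU⟩ := hM
  have himage : ∀ S : Set E, (φ ∘ T) '' (T ⁻¹' S) = φ '' S := fun S => by
    rw [image_comp, image_preimage_eq _ T.surjective]
  refine ⟨T ⁻¹' U, hU.preimage T.continuous, hxU, φ ∘ T, T.symm ∘ ψ, V, hd,
    hφ.comp T.contDiff.contDiffOn (mapsTo_preimage T U), ?_, fun y hy => ?_, ?_⟩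
  · rw [himage]
    exact T.symm.contDiff.comp_contDiffOn hψ
  · simp [hψφ (T y) hy]
  · rw [← preimage_inter, himage, himage, hMU]

end Manifold

/-- The symmetrization `⋃ g, g • M` of a set `M` under a group `G` acting on the ambient space;
membership is phrased as `g • y ∈ M`, which amounts to `y ∈ g⁻¹ • M`. -/
def symmetrization (G : Type*) {E : Type*} [SMul G E] (M : Set E) : Set E :=
  {y | ∃ g : G, g • y ∈ M}

theorem smul_preimage_symmetrization {G E : Type*} [Group G] [MulAction G E] (g : G) (M : Set E) :
    (g • ·) ⁻¹' symmetrization G M = symmetrization G M := by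
  ext y
  refine ⟨fun ⟨h, hy⟩ => ⟨h * g, by rwa [mul_smul]⟩, fun ⟨h, hy⟩ => ⟨h * g⁻¹, ?_⟩⟩
  rwa [mul_smul, inv_smul_smul]

theorem symmetrization_domMulAct_perm {ι α : Type*} (M : Set (ι → α)) :
    symmetrization (Equiv.Perm ι)ᵈᵐᵃ M = {y | ∃ σ : Equiv.Perm ι, y ∘ σ ∈ M} :=
  Set.ext fun _ => DomMulAct.mk.symm.exists_congr_left

section Symmetrization

variable {E G : Type*} [NormedAddCommGroup E] [NormedSpace ℝ E] [FiniteDimensional ℝ E]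
  [Group G] [DistribMulAction G E] [SMulCommClass G ℝ E]

theorem isCkManifoldAroundDim_symmetrization {M : Set E} {k : ℕ∞} {d : ℕ}
    (hM : ∀ x ∈ M, IsCkManifoldAroundDim k d M x)
    (hloc : ∀ x ∈ M, symmetrization G M =ᶠ[𝓝 x] M) {x : E} (hx : x ∈ symmetrization G M) :
    IsCkManifoldAroundDim k d (symmetrization G M) x := by
  obtain ⟨g, hgx⟩ := hx
  have hmfd : IsCkManifoldAroundDim k d (symmetrization G M) (g • x) :=
    isCkManifoldAroundDim_congr (hM _ hgx) (hloc _ hgx).symm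
  rw [← smul_preimage_symmetrization g]
  exact isCkManifoldAroundDim_preimage
    (DistribMulAction.toLinearEquiv ℝ E g).toContinuousLinearEquiv hmfd

variable [Finite G] {f : E → EReal} {F : Set (E × ℝ)}

theorem symmetrization_stratum_eventuallyEq (hsym : ∀ (g : G) (x : E), f (g • x) = f x)
    (hclosed : IsClosed (epigraph f)) (hF : IsExtreme ℝ (epigraph f) F) {x : E}
    (hx : x ∈ stratum F) : symmetrization G (stratum F) =ᶠ[𝓝 x] stratum F := by
  have hall : ∀ᶠ y in 𝓝 x, ∀ g : G, g • y ∈ stratum F → y ∈ stratum F :=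
    eventually_all.2 fun g => eventually_mem_stratum_of_apply_mem
      (T := DistribMulAction.toLinearEquiv ℝ E g) hclosed hF (hsym g) hx
  filter_upwards [hall] with y hy
  exact propext ⟨fun ⟨g, hg⟩ => hy g hg, fun hyM => ⟨1, by rwa [one_smul]⟩⟩

theorem stratum_symmetrization_general (hsym : ∀ (g : G) (x : E), f (g • x) = f x)
    (hclosed : IsClosed (epigraph f)) (hF : IsExtreme ℝ (epigraph f) F) :
    (∀ x ∈ stratum F, ∀ᶠ y in 𝓝 x, y ∈ symmetrization G (stratum F) ↔ y ∈ stratum F) ∧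
    ∀ x ∈ symmetrization G (stratum F), ∀ k : ℕ∞,
      IsCkManifoldAroundDim k (Module.finrank ℝ (vectorSpan ℝ (stratum F)))
        (symmetrization G (stratum F)) x := by
  have hloc := fun x (hx : x ∈ stratum F) =>
    symmetrization_stratum_eventuallyEq hsym hclosed hF hx
  have hmfd := fun k x (hx : x ∈ stratum F) =>
    isCkManifoldAroundDim_of_mem_nhdsWithin_affineSpan k hx (stratum_mem_nhdsWithin_affineSpan hx)
  exact ⟨fun x hx => (hloc x hx).mem_iff,
    fun x hx k => isCkManifoldAroundDim_symmetrization (hmfd k) hloc hx⟩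

end Symmetrization

theorem isClosed_polyhedron {ι : Type*} (a : ι → Fin n → ℝ) (b c : ι → ℝ) :
    IsClosed {p : (Fin n → ℝ) × ℝ | ∀ i, dotp (a i) p.1 + b i * p.2 ≤ c i} := by
  rw [ofPred_forall]
  refine isClosed_iInter fun i => isClosed_le ?_ continuous_const
  unfold dotp
  fun_prop

/-- For a symmetric convex polyhedral function `f` and a stratum `M` of the induced polyhedral
stratification of `dom f` (the projection of the relative interior of a face of `epi f` of
dimension at most `n`), the symmetrization `M^sym = ⋃_σ σM` locally coincides with `M` around
each point of `M`, and `M^sym` is a `C^∞` manifold of the same dimension as `M`. -/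
theorem stratum_symmetrization (f : (Fin n → ℝ) → EReal)
    (hsym : ∀ (σ : Equiv.Perm (Fin n)) (x : Fin n → ℝ), f (x ∘ σ) = f x)
    (hconv : Convex ℝ {p : (Fin n → ℝ) × ℝ | f p.1 ≤ (p.2 : EReal)})
    (hpoly : ∃ (k : ℕ) (a : Fin k → (Fin n → ℝ)) (b c : Fin k → ℝ),
      {p : (Fin n → ℝ) × ℝ | f p.1 ≤ (p.2 : EReal)} =
        {p : (Fin n → ℝ) × ℝ | ∀ i, dotp (a i) p.1 + b i * p.2 ≤ c i})
    (F : Set ((Fin n → ℝ) × ℝ))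
    (hF : IsExtreme ℝ {p : (Fin n → ℝ) × ℝ | f p.1 ≤ (p.2 : EReal)} F)
    (hdim : Module.finrank ℝ (vectorSpan ℝ F) ≤ n)
    (M : Set (Fin n → ℝ)) (hM : M = Prod.fst '' intrinsicInterior ℝ F) :
    (∀ x ∈ M, ∃ ε > (0:ℝ), ∀ y : Fin n → ℝ, ‖y - x‖ < ε →
      ((∃ σ : Equiv.Perm (Fin n), y ∘ σ ∈ M) ↔ y ∈ M)) ∧
    ∀ x ∈ {y : Fin n → ℝ | ∃ σ : Equiv.Perm (Fin n), y ∘ σ ∈ M},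
      IsCkManifoldAroundDim (⊤ : ℕ∞) (Module.finrank ℝ (vectorSpan ℝ M))
        {y : Fin n → ℝ | ∃ σ : Equiv.Perm (Fin n), y ∘ σ ∈ M} x := by
  obtain ⟨k, a, b, c, hepi⟩ := hpoly
  have : Finite (Equiv.Perm (Fin n))ᵈᵐᵃ := .of_equiv _ DomMulAct.mk
  have hgeneral := stratum_symmetrization_general (G := (Equiv.Perm (Fin n))ᵈᵐᵃ)
    (fun g => hsym (DomMulAct.mk.symm g)) (hepi.symm ▸ isClosed_polyhedron a b c :) hF
  rw [symmetrization_domMulAct_perm, stratum, ← hM] at hgeneral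
  simp only [Metric.eventually_nhds_iff, dist_eq_norm] at hgeneral
  exact ⟨hgeneral.1, fun x hx => hgeneral.2 x hx ⊤⟩
end

section
/- Fix 0 ≤ k ≤ n. Let M⁺_k = {X ∈ Sⁿ : X positive semidefinite, rank X = k}. Then M⁺_k = λ⁻¹(M) where M = {x ∈ ℝⁿ_≥ : exactly k coordinates of x are positive and the rest are zero}^sym, and M⁺_k is a C^∞ submanifold of Sⁿ. -/
open Matrix

attribute [local instance] Matrix.normedAddCommGroup Matrix.normedSpace

/-- `M` is a `C^k` manifold around `x` (in an ambient normed space). -/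
def IsCkManifoldAround {E : Type*} [NormedAddCommGroup E] [NormedSpace ℝ E]
    (k : ℕ∞) (M : Set E) (x : E) : Prop :=
  ∃ U : Set E, IsOpen U ∧ x ∈ U ∧ ∃ (φ ψ : E → E) (F : Submodule ℝ E),
    ContDiffOn ℝ k φ U ∧ ContDiffOn ℝ k ψ (φ '' U) ∧
    (∀ y ∈ U, ψ (φ y) = y) ∧ φ '' (M ∩ U) = (F : Set E) ∩ φ '' U

/-!
Diagonalizing `X` by an orthogonal matrix, positive semidefiniteness and rank are read off the
eigenvalues, which gives the spectral description once the eigenvalues are sorted.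

For the manifold structure, a change of basis brings `X` into the block form `[A, 0; 0, 0]` with
`A` positive definite of size `k`. A nearby matrix `[A, B; C, D]` has rank `k` plus the rank of its
Schur complement `D - C A⁻¹ B`, so it is positive semidefinite of rank `k` exactly when it is
symmetric and its Schur complement vanishes. The map replacing `D` by the Schur complement is
smooth with smooth inverse, as the three other blocks are unchanged, and it flattens the set onto
a linear subspace.
-/

section Rank

variable {K m n p q : Type*} [Field K] [Fintype n]

lemma finrank_range_prodMap {V₁ V₂ W₁ W₂ : Type*} [AddCommGroup V₁] [Module K V₁]
    [AddCommGroup V₂] [Module K V₂] [AddCommGroup W₁] [Module K W₁] [AddCommGroup W₂] [Module K W₂]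
    [FiniteDimensional K W₁] [FiniteDimensional K W₂] (f : V₁ →ₗ[K] W₁) (g : V₂ →ₗ[K] W₂) :
    Module.finrank K (LinearMap.range (f.prodMap g)) =
      Module.finrank K (LinearMap.range f) + Module.finrank K (LinearMap.range g) := by
  let ι := (LinearMap.range f).subtype.prodMap (LinearMap.range g).subtype
  have range_eq : LinearMap.range (f.prodMap g) = LinearMap.range ι := by
    simp only [ι, LinearMap.range_prodMap, Submodule.range_subtype]
  have ι_injective : Function.Injective ι :=
    Function.Injective.prodMap (Submodule.subtype_injective _) (Submodule.subtype_injective _)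
  rw [range_eq, LinearMap.finrank_range_of_inj ι_injective, Module.finrank_prod]

lemma rank_fromBlocks_zero_zero [Finite m] [Finite p] [Fintype q]
    (A : Matrix m n K) (D : Matrix p q K) :
    (fromBlocks A 0 0 D).rank = A.rank + D.rank := by
  let e := LinearEquiv.sumArrowLequivProdArrow n q K K
  let e' := (LinearEquiv.sumArrowLequivProdArrow m p K K).symm
  have mulVecLin_eq : (fromBlocks A 0 0 D).mulVecLin =
      e'.toLinearMap ∘ₗ A.mulVecLin.prodMap D.mulVecLin ∘ₗ e.toLinearMap := by
    refine LinearMap.ext fun v ↦ ?_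
    ext (i | i) <;> simp [e, e', fromBlocks_mulVec] <;> rfl
  rw [Matrix.rank, mulVecLin_eq, LinearMap.range_comp, LinearEquiv.finrank_map_eq,
    LinearMap.range_comp_of_range_eq_top _ e.range, finrank_range_prodMap]
  rfl

lemma rank_eq_zero_iff_eq_zero (A : Matrix m n K) : A.rank = 0 ↔ A = 0 := by
  classical
  rw [Matrix.rank, Submodule.finrank_eq_zero, LinearMap.range_eq_bot, ← Matrix.toLin'_apply',
    LinearEquiv.map_eq_zero_iff]

lemma rank_fromBlocks_of_isUnit_det₁₁ [Fintype m] [DecidableEq m] [Finite p] {A : Matrix m m K}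
    (hA : IsUnit A.det) (B : Matrix m n K) (C : Matrix p m K) (D : Matrix p n K) :
    (fromBlocks A B C D).rank = Fintype.card m + (D - C * A⁻¹ * B).rank := by
  classical
  have := Fintype.ofFinite p
  let := A.invertibleOfIsUnitDet hA
  rw [fromBlocks_eq_of_invertible₁₁, rank_mul_eq_left_of_isUnit_det _ _ (by simp),
    rank_mul_eq_right_of_isUnit_det _ _ (by simp), rank_fromBlocks_zero_zero,
    rank_of_isUnit A ((isUnit_iff_isUnit_det A).mpr hA), invOf_eq_nonsing_inv]

end Rank

section Smoothness

variable {𝕜 E l m n : Type*} [NontriviallyNormedField 𝕜] [NormedAddCommGroup E] [NormedSpace 𝕜 E]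
  [Fintype l] [Fintype m] [Fintype n] {r : WithTop ℕ∞} {s : Set E}

lemma contDiffOn_matrix_iff {f : E → Matrix m n 𝕜} :
    ContDiffOn 𝕜 r f s ↔ ∀ i j, ContDiffOn 𝕜 r (fun y ↦ f y i j) s :=
  contDiffOn_pi.trans (forall_congr' fun _ ↦ contDiffOn_pi)

lemma contDiffOn_matrix_mul {f : E → Matrix l m 𝕜} {g : E → Matrix m n 𝕜}
    (hf : ContDiffOn 𝕜 r f s) (hg : ContDiffOn 𝕜 r g s) :
    ContDiffOn 𝕜 r (fun y ↦ f y * g y) s := by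
  rw [contDiffOn_matrix_iff] at *
  simp only [Matrix.mul_apply]
  exact fun i j ↦ ContDiffOn.sum fun k _ ↦ (hf i k).mul (hg k j)

variable [DecidableEq n] {f : E → Matrix n n 𝕜}

lemma contDiffOn_matrix_det (hf : ContDiffOn 𝕜 r f s) :
    ContDiffOn 𝕜 r (fun y ↦ (f y).det) s := by
  rw [contDiffOn_matrix_iff] at hf
  simp only [Matrix.det_apply']
  exact ContDiffOn.sum fun σ _ ↦ contDiffOn_const.mul (contDiffOn_prod fun i _ ↦ hf _ _)

lemma contDiffOn_matrix_adjugate (hf : ContDiffOn 𝕜 r f s) :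
    ContDiffOn 𝕜 r (fun y ↦ (f y).adjugate) s := by
  refine contDiffOn_matrix_iff.mpr fun i j ↦ ?_
  simp only [Matrix.adjugate_apply]
  refine contDiffOn_matrix_det (contDiffOn_matrix_iff.mpr fun a b ↦ ?_)
  rcases eq_or_ne a j with rfl | ha
  · simpa only [Matrix.updateRow_self] using contDiffOn_const
  · simpa only [Matrix.updateRow_ne ha] using contDiffOn_matrix_iff.mp hf a b

lemma contDiffOn_matrix_inv (hf : ContDiffOn 𝕜 r f s) (hdet : ∀ y ∈ s, IsUnit (f y).det) :
    ContDiffOn 𝕜 r (fun y ↦ (f y)⁻¹) s := by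
  simp only [Matrix.inv_def, Ring.inverse_eq_inv']
  exact ((contDiffOn_matrix_det hf).inv fun y hy ↦ (hdet y hy).ne_zero).smul
    (contDiffOn_matrix_adjugate hf)

end Smoothness

section PositiveForms

lemma posDef_iff_forall_mem_sphere {V : Type*} [NormedAddCommGroup V] [NormedSpace ℝ V]
    (Q : QuadraticForm ℝ V) : Q.PosDef ↔ ∀ x ∈ Metric.sphere (0 : V) 1, 0 < Q x := by
  refine ⟨fun hQ x hx ↦ hQ x (ne_zero_of_mem_unit_sphere ⟨x, hx⟩), fun hQ x hx ↦ ?_⟩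
  have hnorm : 0 < ‖x‖⁻¹ := inv_pos.mpr (norm_pos_iff.mpr hx)
  have hunit : ‖x‖⁻¹ • x ∈ Metric.sphere (0 : V) 1 := by
    simp [norm_smul, hx]
  have hpos := hQ _ hunit
  rw [QuadraticMap.map_smul, smul_eq_mul] at hpos
  exact pos_of_mul_pos_right hpos (mul_pos hnorm hnorm).le

variable {m : Type*} [Fintype m] [DecidableEq m]

lemma toQuadraticForm'_apply_eq_dotProduct {R : Type*} [CommRing R] (A : Matrix m m R)
    (x : m → R) : A.toQuadraticForm' x = x ⬝ᵥ A *ᵥ x :=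
  Matrix.toLinearMap₂'_apply' A x x

lemma isOpen_setOf_toQuadraticForm'_posDef :
    IsOpen {A : Matrix m m ℝ | A.toQuadraticForm'.PosDef} := by
  simp only [posDef_iff_forall_mem_sphere, toQuadraticForm'_apply_eq_dotProduct,
    isOpen_iff_eventually]
  refine fun A hA ↦
    (isCompact_sphere (0 : m → ℝ) 1).eventually_forall_of_forall_eventually fun x hx ↦ ?_
  have continuous_form : Continuous fun z : Matrix m m ℝ × (m → ℝ) ↦ z.2 ⬝ᵥ z.1 *ᵥ z.2 := by
    fun_prop
  exact continuous_form.continuousAt.eventually (lt_mem_nhds (hA x hx))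

lemma isUnit_det_of_toQuadraticForm'_posDef {K : Type*} [Field K] [PartialOrder K]
    {A : Matrix m m K} (hA : A.toQuadraticForm'.PosDef) : IsUnit A.det := by
  rw [isUnit_iff_ne_zero]
  intro hdet
  obtain ⟨v, hv, hAv⟩ := Matrix.exists_mulVec_eq_zero_iff.mpr hdet
  have hpos := hA v hv
  simp [toQuadraticForm'_apply_eq_dotProduct, hAv] at hpos

end PositiveForms

section Support

lemma mem_iff_lt_card_of_isLowerSet {n : ℕ} {s : Finset (Fin n)}
    (hs : IsLowerSet (s : Set (Fin n))) (i : Fin n) : i ∈ s ↔ (i : ℕ) < s.card := by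
  constructor
  · intro hi
    have Iic_subset : Finset.Iic i ⊆ s := fun j hj ↦ hs (Finset.mem_Iic.mp hj) hi
    simpa only [Fin.card_Iic, Nat.succ_le_iff] using Finset.card_le_card Iic_subset
  · contrapose!
    intro hi
    have subset_Iio : s ⊆ Finset.Iio i := fun j hj ↦
      Finset.mem_Iio.mpr (lt_of_not_ge fun hij ↦ hi (hs hij hj))
    simpa only [Fin.card_Iio] using Finset.card_le_card subset_Iio

variable {α : Type*} [LinearOrder α] [Zero α] {n k : ℕ}

lemma pos_initial_segment_iff_of_antitone (hk : k ≤ n) {z : Fin n → α} (hz : Antitone z) :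
    (∀ i : Fin n, if (i : ℕ) < k then 0 < z i else z i = 0) ↔
      0 ≤ z ∧ Fintype.card {i // z i ≠ 0} = k := by
  rw [Fintype.card_subtype]
  constructor
  · intro h
    have ne_zero_iff (i : Fin n) : z i ≠ 0 ↔ (i : ℕ) < k := by grind
    refine ⟨fun i ↦ ?_, ?_⟩
    · change 0 ≤ z i
      grind
    · simp only [ne_zero_iff, Fin.card_filter_val_lt, min_eq_right hk]
  · rintro ⟨nonneg, card_eq⟩ i
    have isLowerSet_support :
        IsLowerSet ((Finset.univ.filter fun i ↦ z i ≠ 0 : Finset (Fin n)) : Set (Fin n)) := by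
      intro a b hba ha
      rw [Finset.mem_coe, Finset.mem_filter_univ] at ha ⊢
      exact (((nonneg a).lt_of_ne' ha).trans_le (hz hba)).ne'
    have ne_zero_iff := mem_iff_lt_card_of_isLowerSet isLowerSet_support i
    rw [card_eq, Finset.mem_filter_univ] at ne_zero_iff
    split_ifs with hi
    · exact (nonneg i).lt_of_ne' (ne_zero_iff.mpr hi)
    · exact not_not.mp (ne_zero_iff.not.mpr hi)

lemma exists_perm_antitone_pos_initial_segment_iff (hk : k ≤ n) (x : Fin n → α) :
    (∃ σ : Equiv.Perm (Fin n), Antitone (x ∘ σ) ∧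
      ∀ i : Fin n, if (i : ℕ) < k then 0 < (x ∘ σ) i else (x ∘ σ) i = 0) ↔
      0 ≤ x ∧ Fintype.card {i // x i ≠ 0} = k := by
  have comp_perm_iff (σ : Equiv.Perm (Fin n)) :
      (0 ≤ x ∘ σ ∧ Fintype.card {i // (x ∘ σ) i ≠ 0} = k) ↔
        0 ≤ x ∧ Fintype.card {i // x i ≠ 0} = k := by
    have card_eq : Fintype.card {i // (x ∘ σ) i ≠ 0} = Fintype.card {i // x i ≠ 0} :=
      Fintype.card_congr (σ.subtypeEquiv fun _ ↦ Iff.rfl)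
    have nonneg_iff : 0 ≤ x ∘ σ ↔ 0 ≤ x := σ.forall_congr_right (q := fun i ↦ 0 ≤ x i)
    rw [card_eq, nonneg_iff]
  constructor
  · rintro ⟨σ, hσ, h⟩
    exact (comp_perm_iff σ).mp ((pos_initial_segment_iff_of_antitone hk hσ).mp h)
  · intro h
    let σ := Tuple.sort (OrderDual.toDual ∘ x)
    have hσ : Antitone (x ∘ σ) := Tuple.monotone_sort (OrderDual.toDual ∘ x)
    exact ⟨σ, hσ, (pos_initial_segment_iff_of_antitone hk hσ).mpr ((comp_perm_iff σ).mpr h)⟩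

end Support

/-- The set `M⁺_k` of real positive semidefinite matrices of rank `k`, for an arbitrary finite
index type, so that block matrices are covered. -/
def psdOfRank (ι : Type*) [Fintype ι] (k : ℕ) : Set (Matrix ι ι ℝ) :=
  {X | X.PosSemidef ∧ X.rank = k}

section SpectralDescription

variable {ι : Type*} [Fintype ι] [DecidableEq ι]

lemma exists_orthogonal_diagonalization {X : Matrix ι ι ℝ} (hX : X.IsHermitian) :
    ∃ U : Matrix ι ι ℝ, Uᵀ * U = 1 ∧ X = Uᵀ * diagonal hX.eigenvalues * U := by
  refine ⟨(hX.eigenvectorUnitary : Matrix ι ι ℝ)ᵀ, ?_, ?_⟩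
  · simpa [Matrix.star_eq_conjTranspose] using Unitary.coe_mul_star_self hX.eigenvectorUnitary
  · simpa [Unitary.conjStarAlgAut_apply, Matrix.star_eq_conjTranspose, Function.comp_def] using
      hX.spectral_theorem

lemma mem_psdOfRank_iff_exists_orthogonal_diagonalization {k : ℕ} {X : Matrix ι ι ℝ} :
    X ∈ psdOfRank ι k ↔ ∃ x : ι → ℝ, (0 ≤ x ∧ Fintype.card {i // x i ≠ 0} = k) ∧
      ∃ U : Matrix ι ι ℝ, Uᵀ * U = 1 ∧ X = Uᵀ * diagonal x * U := by
  constructor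
  · rintro ⟨hX, hrank⟩
    refine ⟨hX.1.eigenvalues, ⟨hX.eigenvalues_nonneg, ?_⟩, exists_orthogonal_diagonalization hX.1⟩
    rw [← hX.1.rank_eq_card_non_zero_eigs, hrank]
  · rintro ⟨x, ⟨hx, hcard⟩, U, hU, rfl⟩
    have hdet : IsUnit U.det := isUnit_det_of_left_inverse hU
    refine ⟨?_, ?_⟩
    · simpa only [conjTranspose_eq_transpose_of_trivial] using
        (PosSemidef.diagonal hx).conjTranspose_mul_mul_same U
    · rw [rank_mul_eq_left_of_isUnit_det _ _ hdet,
        rank_mul_eq_right_of_isUnit_det _ _ (isUnit_det_transpose U hdet), rank_diagonal, hcard]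

end SpectralDescription

section Manifold

variable {E F : Type*} [NormedAddCommGroup E] [NormedSpace ℝ E] [NormedAddCommGroup F]
  [NormedSpace ℝ F] {r : ℕ∞}

lemma IsCkManifoldAround.preimage {M : Set F} (e : E ≃L[ℝ] F) {x : E}
    (h : IsCkManifoldAround r M (e x)) : IsCkManifoldAround r (e ⁻¹' M) x := by
  obtain ⟨U, hU, hxU, φ, ψ, L, hφ, hψ, hψφ, himage⟩ := h
  have image_conj (s : Set F) :
      (fun y ↦ e.symm (φ (e y))) '' (e ⁻¹' s) = e ⁻¹' (φ '' s) := by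
    rw [← e.image_symm_eq_preimage, ← e.image_symm_eq_preimage, Set.image_image, Set.image_image]
    simp only [e.apply_symm_apply]
  refine ⟨e ⁻¹' U, hU.preimage e.continuous, hxU, fun y ↦ e.symm (φ (e y)),
    fun z ↦ e.symm (ψ (e z)), L.comap (e : E →ₗ[ℝ] F), ?_, ?_, ?_, ?_⟩
  · exact e.symm.contDiff.comp_contDiffOn (hφ.comp e.contDiff.contDiffOn fun _ hy ↦ hy)
  · rw [image_conj]
    exact e.symm.contDiff.comp_contDiffOn (hψ.comp e.contDiff.contDiffOn fun _ hz ↦ hz)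
  · intro y hy
    simp only [e.apply_symm_apply, hψφ _ hy, e.symm_apply_apply]
  · rw [← Set.preimage_inter, image_conj, image_conj, himage]
    rfl

lemma isCkManifoldAround_of_shear {U M : Set E} {L : Submodule ℝ E} {g : E → E} {x : E}
    (hU : IsOpen U) (hxU : x ∈ U) (hg : ContDiffOn ℝ r g U) (hmaps : ∀ y ∈ U, y - g y ∈ U)
    (hinv : ∀ y ∈ U, g (y - g y) = g y) (hmem : ∀ y ∈ U, y ∈ M ↔ y - g y ∈ L) :
    IsCkManifoldAround r M x := by
  refine ⟨U, hU, hxU, fun y ↦ y - g y, fun z ↦ z + g z, L, contDiffOn_id.sub hg, ?_, ?_, ?_⟩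
  · exact (contDiffOn_id.add hg).mono (Set.image_subset_iff.mpr hmaps)
  · intro y hy
    simp only [hinv y hy, sub_add_cancel]
  · ext z
    constructor
    · rintro ⟨y, ⟨hyM, hyU⟩, rfl⟩
      exact ⟨(hmem y hyU).mp hyM, y, hyU, rfl⟩
    · rintro ⟨hz, y, hyU, rfl⟩
      exact ⟨y, ⟨(hmem y hyU).mpr hz, hyU⟩, rfl⟩

end Manifold

section SchurChart

variable {m q : Type*}

section Field

variable {K : Type*} [Field K] [Fintype m] [DecidableEq m]

/-- The block matrix whose only nonzero block is the correction term `C A⁻¹ B` in the Schur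
complement of the upper left block `A`; subtracting it from `Y` puts the Schur complement in the
lower right corner and leaves the other three blocks alone. -/
noncomputable def schurCorrection (Y : Matrix (m ⊕ q) (m ⊕ q) K) : Matrix (m ⊕ q) (m ⊕ q) K :=
  fromBlocks 0 0 0 (Y.toBlocks₂₁ * Y.toBlocks₁₁⁻¹ * Y.toBlocks₁₂)

lemma fromBlocks_sub_schurCorrection (A : Matrix m m K) (B : Matrix m q K) (C : Matrix q m K)
    (D : Matrix q q K) :
    fromBlocks A B C D - schurCorrection (fromBlocks A B C D) =
      fromBlocks A B C (D - C * A⁻¹ * B) := by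
  simp [schurCorrection, sub_eq_add_neg, fromBlocks_neg, fromBlocks_add]

lemma toBlocks₁₁_sub_schurCorrection (Y : Matrix (m ⊕ q) (m ⊕ q) K) :
    (Y - schurCorrection Y).toBlocks₁₁ = Y.toBlocks₁₁ := by
  rw [← fromBlocks_toBlocks Y, fromBlocks_sub_schurCorrection]
  simp only [toBlocks_fromBlocks₁₁]

lemma schurCorrection_sub_schurCorrection (Y : Matrix (m ⊕ q) (m ⊕ q) K) :
    schurCorrection (Y - schurCorrection Y) = schurCorrection Y := by
  rw [← fromBlocks_toBlocks Y, fromBlocks_sub_schurCorrection]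
  simp only [schurCorrection, toBlocks_fromBlocks₁₁, toBlocks_fromBlocks₁₂, toBlocks_fromBlocks₂₁]

end Field

/-- The model space of the chart: symmetric block matrices with vanishing lower right block. -/
def symmZeroCorner (R m q : Type*) [Semiring R] : Submodule R (Matrix (m ⊕ q) (m ⊕ q) R) where
  carrier := {Z | Z.IsSymm ∧ Z.toBlocks₂₂ = 0}
  zero_mem' := ⟨isSymm_zero, rfl⟩
  add_mem' := by
    rintro Y Z ⟨hY, hY₂₂⟩ ⟨hZ, hZ₂₂⟩
    exact ⟨hY.add hZ, (congrArg₂ (· + ·) hY₂₂ hZ₂₂).trans (add_zero 0)⟩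
  smul_mem' := by
    rintro c Z ⟨hZ, hZ₂₂⟩
    exact ⟨hZ.smul c, (congrArg (c • ·) hZ₂₂).trans (smul_zero c)⟩

lemma fromBlocks_mem_symmZeroCorner_iff {R : Type*} [Semiring R] {A : Matrix m m R}
    {B : Matrix m q R} {C : Matrix q m R} {D : Matrix q q R} :
    fromBlocks A B C D ∈ symmZeroCorner R m q ↔ A.IsSymm ∧ Bᵀ = C ∧ D = 0 := by
  change (fromBlocks A B C D).IsSymm ∧ (fromBlocks A B C D).toBlocks₂₂ = 0 ↔ _
  rw [isSymm_fromBlocks_iff, toBlocks_fromBlocks₂₂]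
  constructor
  · rintro ⟨⟨hA, hBC, -, -⟩, hD⟩
    exact ⟨hA, hBC, hD⟩
  · rintro ⟨hA, rfl, rfl⟩
    exact ⟨⟨hA, rfl, transpose_transpose B, isSymm_zero⟩, rfl⟩

variable [Fintype m] [Fintype q]

lemma contDiffOn_schurCorrection [DecidableEq m] {𝕜 : Type*} [NontriviallyNormedField 𝕜]
    {r : WithTop ℕ∞} :
    ContDiffOn 𝕜 r (schurCorrection : Matrix (m ⊕ q) (m ⊕ q) 𝕜 → Matrix (m ⊕ q) (m ⊕ q) 𝕜)
      {Y | IsUnit Y.toBlocks₁₁.det} := by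
  have contDiffOn_entry := contDiffOn_matrix_iff.mp
    (contDiffOn_id : ContDiffOn 𝕜 r id {Y : Matrix (m ⊕ q) (m ⊕ q) 𝕜 | IsUnit Y.toBlocks₁₁.det})
  have contDiffOn_corner := contDiffOn_matrix_mul
    (contDiffOn_matrix_mul
      (contDiffOn_matrix_iff.mpr fun i j ↦ contDiffOn_entry (Sum.inr i) (Sum.inl j))
      (contDiffOn_matrix_inv
        (contDiffOn_matrix_iff.mpr fun i j ↦ contDiffOn_entry (Sum.inl i) (Sum.inl j))
        fun Y hY ↦ hY))
    (contDiffOn_matrix_iff.mpr fun i j ↦ contDiffOn_entry (Sum.inl i) (Sum.inr j))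
  rw [contDiffOn_matrix_iff]
  rintro (i | i) (j | j)
  · exact contDiffOn_const
  · exact contDiffOn_const
  · exact contDiffOn_const
  · exact contDiffOn_matrix_iff.mp contDiffOn_corner i j

lemma fromBlocks_mem_psdOfRank_iff [DecidableEq m] {A : Matrix m m ℝ}
    (hA : A.toQuadraticForm'.PosDef) (B : Matrix m q ℝ) (C : Matrix q m ℝ) (D : Matrix q q ℝ) :
    fromBlocks A B C D ∈ psdOfRank (m ⊕ q) (Fintype.card m) ↔
      A.IsSymm ∧ Bᵀ = C ∧ D - C * A⁻¹ * B = 0 := by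
  have hdet := isUnit_det_of_toQuadraticForm'_posDef hA
  have rank_eq_iff :
      (fromBlocks A B C D).rank = Fintype.card m ↔ D - C * A⁻¹ * B = 0 := by
    rw [rank_fromBlocks_of_isUnit_det₁₁ hdet, Nat.add_eq_left, rank_eq_zero_iff_eq_zero]
  constructor
  · rintro ⟨hpsd, hrank⟩
    obtain ⟨hAsymm, hBC, -, -⟩ := isHermitian_fromBlocks_iff.mp hpsd.1
    exact ⟨hAsymm, hBC, rank_eq_iff.mp hrank⟩
  · rintro ⟨hAsymm, rfl, hschur⟩
    refine ⟨?_, rank_eq_iff.mpr hschur⟩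
    let := A.invertibleOfIsUnitDet hdet
    have posSemidef_iff := PosDef.fromBlocks₁₁ B D (PosDef.of_toQuadraticForm' hAsymm hA)
    rw [conjTranspose_eq_transpose_of_trivial, hschur] at posSemidef_iff
    exact posSemidef_iff.mpr PosSemidef.zero

lemma isCkManifoldAround_psdOfRank_of_toBlocks₁₁_posDef (r : ℕ∞)
    {X : Matrix (m ⊕ q) (m ⊕ q) ℝ} (hX : X.toBlocks₁₁.PosDef) :
    IsCkManifoldAround r (psdOfRank (m ⊕ q) (Fintype.card m)) X := by
  classical
  have continuous_toBlocks₁₁ :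
      Continuous (toBlocks₁₁ : Matrix (m ⊕ q) (m ⊕ q) ℝ → Matrix m m ℝ) := by
    unfold toBlocks₁₁
    fun_prop
  -- Near `X` the upper left block need not be symmetric, so positivity is imposed on its quadratic
  -- form alone: this is an open condition on all matrices, unlike `Matrix.PosDef`.
  refine isCkManifoldAround_of_shear
    (isOpen_setOf_toQuadraticForm'_posDef.preimage continuous_toBlocks₁₁) hX.toQuadraticForm'
    (L := symmZeroCorner ℝ m q) (g := schurCorrection) ?_ ?_ ?_ ?_
  · exact contDiffOn_schurCorrection.mono fun Y hY ↦ isUnit_det_of_toQuadraticForm'_posDef hY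
  · intro Y hY
    rwa [Set.mem_preimage, toBlocks₁₁_sub_schurCorrection]
  · exact fun Y _ ↦ schurCorrection_sub_schurCorrection Y
  · intro Y hY
    rw [← fromBlocks_toBlocks Y, fromBlocks_sub_schurCorrection, fromBlocks_mem_psdOfRank_iff hY,
      fromBlocks_mem_symmZeroCorner_iff]

end SchurChart

section Congruence

variable {ι κ : Type*} [Fintype ι] [Fintype κ]

lemma rank_mul_mul_le {R l o : Type*} [CommSemiring R] [StrongRankCondition R] [Fintype o]
    (W : Matrix l ι R) (Y : Matrix ι κ R) (V : Matrix κ o R) : (W * Y * V).rank ≤ Y.rank :=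
  (rank_mul_le_left _ _).trans (rank_mul_le_right _ _)

variable [DecidableEq ι] [DecidableEq κ]

/-- The congruence `Y ↦ W Y Wᴴ` by a matrix `W` with two-sided inverse `V`. The index types may
differ, so that a change of basis and a reordering of the coordinates into blocks are one step. -/
def congruenceEquiv {R : Type*} [CommRing R] [StarRing R] (W : Matrix κ ι R) (V : Matrix ι κ R)
    (hWV : W * V = 1) (hVW : V * W = 1) : Matrix ι ι R ≃ₗ[R] Matrix κ κ R where
  toFun Y := W * Y * Wᴴ
  invFun Z := V * Z * Vᴴ
  map_add' Y Z := by rw [Matrix.mul_add, Matrix.add_mul]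
  map_smul' c Y := by rw [Matrix.mul_smul, Matrix.smul_mul, RingHom.id_apply]
  left_inv Y := by
    calc V * (W * Y * Wᴴ) * Vᴴ = (V * W) * Y * (V * W)ᴴ := by
          simp only [conjTranspose_mul, Matrix.mul_assoc]
      _ = Y := by rw [hVW, conjTranspose_one, Matrix.one_mul, Matrix.mul_one]
  right_inv Z := by
    calc W * (V * Z * Vᴴ) * Wᴴ = (W * V) * Z * (W * V)ᴴ := by
          simp only [conjTranspose_mul, Matrix.mul_assoc]
      _ = Z := by rw [hWV, conjTranspose_one, Matrix.one_mul, Matrix.mul_one]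

lemma congruenceEquiv_mem_psdOfRank_iff {W : Matrix κ ι ℝ} {V : Matrix ι κ ℝ} (hWV : W * V = 1)
    (hVW : V * W = 1) {k : ℕ} {Y : Matrix ι ι ℝ} :
    congruenceEquiv W V hWV hVW Y ∈ psdOfRank κ k ↔ Y ∈ psdOfRank ι k := by
  have hY : V * congruenceEquiv W V hWV hVW Y * Vᴴ = Y :=
    (congruenceEquiv W V hWV hVW).symm_apply_apply Y
  have rank_eq : (congruenceEquiv W V hWV hVW Y).rank = Y.rank :=
    le_antisymm (rank_mul_mul_le W Y Wᴴ)
      (by simpa only [hY] using rank_mul_mul_le V (congruenceEquiv W V hWV hVW Y) Vᴴ)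
  have posSemidef_iff : (congruenceEquiv W V hWV hVW Y).PosSemidef ↔ Y.PosSemidef :=
    ⟨fun h ↦ hY ▸ h.mul_mul_conjTranspose_same V, fun h ↦ h.mul_mul_conjTranspose_same W⟩
  exact and_congr posSemidef_iff (by rw [rank_eq])

lemma isCkManifoldAround_psdOfRank_of_congruence {r : ℕ∞} {k : ℕ} {W : Matrix κ ι ℝ}
    {V : Matrix ι κ ℝ} (hWV : W * V = 1) (hVW : V * W = 1) {X : Matrix ι ι ℝ}
    (h : IsCkManifoldAround r (psdOfRank κ k) (W * X * Wᴴ)) :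
    IsCkManifoldAround r (psdOfRank ι k) X := by
  let e := (congruenceEquiv W V hWV hVW).toContinuousLinearEquiv
  have preimage_eq : e ⁻¹' psdOfRank κ k = psdOfRank ι k :=
    Set.ext fun _ ↦ congruenceEquiv_mem_psdOfRank_iff hWV hVW
  exact preimage_eq ▸ IsCkManifoldAround.preimage e h

end Congruence

lemma isCkManifoldAround_psdOfRank {ι : Type*} [Fintype ι] (r : ℕ∞) {k : ℕ} {X : Matrix ι ι ℝ}
    (hX : X ∈ psdOfRank ι k) :
    IsCkManifoldAround r (psdOfRank ι k) X := by
  classical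
  obtain ⟨x, ⟨hx, rfl⟩, U, hU, rfl⟩ := mem_psdOfRank_iff_exists_orthogonal_diagonalization.mp hX
  have hU' : U * Uᵀ = 1 := mul_eq_one_comm.mp hU
  let e : {i // x i ≠ 0} ⊕ {i // ¬x i ≠ 0} ≃ ι := Equiv.sumCompl fun i ↦ x i ≠ 0
  let W := U.submatrix e id
  have hWWt : W * Wᵀ = 1 := by
    calc W * Wᵀ = (U * Uᵀ).submatrix e e := rfl
      _ = 1 := by rw [hU', submatrix_one_equiv]
  have hWtW : Wᵀ * W = 1 := by
    calc Wᵀ * W = (Uᵀ * U).submatrix id id := submatrix_mul_equiv Uᵀ U id e id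
      _ = 1 := by rw [hU, submatrix_id_id]
  have diagonalized : W * (Uᵀ * diagonal x * U) * Wᴴ = diagonal (x ∘ e) := by
    calc W * (Uᵀ * diagonal x * U) * Wᴴ
        = (U * (Uᵀ * diagonal x * U) * Uᵀ).submatrix e e := rfl
      _ = (U * Uᵀ * diagonal x * (U * Uᵀ)).submatrix e e := by simp only [Matrix.mul_assoc]
      _ = diagonal (x ∘ e) := by
        rw [hU', Matrix.one_mul, Matrix.mul_one, submatrix_diagonal_equiv]
  refine isCkManifoldAround_psdOfRank_of_congruence hWWt hWtW
    (isCkManifoldAround_psdOfRank_of_toBlocks₁₁_posDef r ?_)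
  rw [diagonalized, toBlocks₁₁_diagonal]
  exact PosDef.diagonal fun i ↦ (hx i).lt_of_ne' i.2

/-- The set `M⁺_k` of positive semidefinite `n × n` matrices of rank `k` is the spectral lift
`λ⁻¹(M^sym)` of the set `M` of nonincreasing vectors with exactly `k` positive coordinates and
the rest zero, and it is a `C^∞` submanifold. -/
theorem psd_fixed_rank_manifold (n k : ℕ) (hk : k ≤ n) :
    {X : Matrix (Fin n) (Fin n) ℝ | X.PosSemidef ∧ X.rank = k} =
      {X : Matrix (Fin n) (Fin n) ℝ | ∃ x : Fin n → ℝ,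
        (∃ σ : Equiv.Perm (Fin n), Antitone (x ∘ σ) ∧
          ∀ i : Fin n, if (i : ℕ) < k then 0 < (x ∘ σ) i else (x ∘ σ) i = 0) ∧
        ∃ U : Matrix (Fin n) (Fin n) ℝ, Uᵀ * U = 1 ∧ X = Uᵀ * Matrix.diagonal x * U} ∧
    ∀ X ∈ {X : Matrix (Fin n) (Fin n) ℝ | X.PosSemidef ∧ X.rank = k},
      IsCkManifoldAround (⊤ : ℕ∞) {X : Matrix (Fin n) (Fin n) ℝ | X.PosSemidef ∧ X.rank = k} X := by
  refine ⟨Set.ext fun X ↦ ?_, fun X hX ↦ isCkManifoldAround_psdOfRank ⊤ hX⟩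
  simp only [Set.mem_ofPred_eq, exists_perm_antitone_pos_initial_segment_iff hk]
  exact mem_psdOfRank_iff_exists_orthogonal_diagonalization
end
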